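/- Let Σ be a subset of the function symbols occurring in the EUF formula G, let f ∈ Σ, and let Ĝ be the result of eliminating f from G by the nested-ITE construction with fresh domain variables vf_1,...,vf_n. Then for any interpretation J that is diverse for G with respect to Σ, there is an interpretation Ĵ that is diverse for Ĝ with respect to (Σ \ {f}) ∪ {vf_1,...,vf_n} and satisfies Ĵ[Ĝ] = J[G]. -/

import Mathlib

mutual
inductive EufTerm (Fn Pr : Type) : Type
  | app : Fn → List (EufTerm Fn Pr) → EufTerm Fn Pr
  | ite : EufFormula Fn Pr → EufTerm Fn Pr → EufTerm Fn Pr → EufTerm Fn Pr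
inductive EufFormula (Fn Pr : Type) : Type
  | tt : EufFormula Fn Pr
  | ff : EufFormula Fn Pr
  | not : EufFormula Fn Pr → EufFormula Fn Pr
  | and : EufFormula Fn Pr → EufFormula Fn Pr → EufFormula Fn Pr
  | or : EufFormula Fn Pr → EufFormula Fn Pr → EufFormula Fn Pr
  | eq : EufTerm Fn Pr → EufTerm Fn Pr → EufFormula Fn Pr
  | papp : Pr → List (EufTerm Fn Pr) → EufFormula Fn Pr
end

structure Interp (Fn Pr : Type) (D : Type u) where
  fn : Fn → List D → D
  pr : Pr → List D → Bool

open Classical in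
mutual
noncomputable def evalT {Fn Pr : Type} {D : Type} (I : Interp Fn Pr D) : EufTerm Fn Pr → D
  | .app f args => I.fn f (args.attach.map (fun t => evalT I t.1))
  | .ite G T1 T2 => if evalF I G then evalT I T1 else evalT I T2
termination_by t => sizeOf t
decreasing_by
  all_goals simp_wf
  all_goals try omega
  all_goals (have := List.sizeOf_lt_of_mem t.2; omega)
noncomputable def evalF {Fn Pr : Type} {D : Type} (I : Interp Fn Pr D) : EufFormula Fn Pr → Bool
  | .tt => true
  | .ff => false
  | .not G => !evalF I G
  | .and G1 G2 => evalF I G1 && evalF I G2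
  | .or G1 G2 => evalF I G1 || evalF I G2
  | .eq T1 T2 => decide (evalT I T1 = evalT I T2)
  | .papp p args => I.pr p (args.attach.map (fun t => evalT I t.1))
termination_by g => sizeOf g
decreasing_by
  all_goals simp_wf
  all_goals try omega
  all_goals (have := List.sizeOf_lt_of_mem t.2; omega)
end
def ValidOn {Fn Pr : Type} (F : EufFormula Fn Pr) (D : Type) : Prop :=
  ∀ I : Interp Fn Pr D, evalF I F = true

def UniversallyValid {Fn Pr : Type} (F : EufFormula Fn Pr) : Prop :=
  ∀ D : Type, Nonempty D → ValidOn F D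

/-- Expressions: terms or formulas. -/
inductive EufExpr (Fn Pr : Type) : Type
  | t : EufTerm Fn Pr → EufExpr Fn Pr
  | f : EufFormula Fn Pr → EufExpr Fn Pr

/-- Immediate (proper) subexpression relation. -/
inductive ImmSub {Fn Pr : Type} : EufExpr Fn Pr → EufExpr Fn Pr → Prop
  | appArg {g : Fn} {args : List (EufTerm Fn Pr)} {T : EufTerm Fn Pr} :
      T ∈ args → ImmSub (.t T) (.t (.app g args))
  | iteC {G : EufFormula Fn Pr} {T1 T2 : EufTerm Fn Pr} : ImmSub (.f G) (.t (.ite G T1 T2))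
  | ite1 {G : EufFormula Fn Pr} {T1 T2 : EufTerm Fn Pr} : ImmSub (.t T1) (.t (.ite G T1 T2))
  | ite2 {G : EufFormula Fn Pr} {T1 T2 : EufTerm Fn Pr} : ImmSub (.t T2) (.t (.ite G T1 T2))
  | not {G : EufFormula Fn Pr} : ImmSub (.f G) (.f (.not G))
  | andL {G1 G2 : EufFormula Fn Pr} : ImmSub (.f G1) (.f (.and G1 G2))
  | andR {G1 G2 : EufFormula Fn Pr} : ImmSub (.f G2) (.f (.and G1 G2))
  | orL {G1 G2 : EufFormula Fn Pr} : ImmSub (.f G1) (.f (.or G1 G2))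
  | orR {G1 G2 : EufFormula Fn Pr} : ImmSub (.f G2) (.f (.or G1 G2))
  | eqL {T1 T2 : EufTerm Fn Pr} : ImmSub (.t T1) (.f (.eq T1 T2))
  | eqR {T1 T2 : EufTerm Fn Pr} : ImmSub (.t T2) (.f (.eq T1 T2))
  | pappArg {p : Pr} {args : List (EufTerm Fn Pr)} {T : EufTerm Fn Pr} :
      T ∈ args → ImmSub (.t T) (.f (.papp p args))

/-- `SubExpr a b`: `a` occurs (as a subexpression) in `b`. -/
def SubExpr {Fn Pr : Type} (a b : EufExpr Fn Pr) : Prop := Relation.ReflTransGen ImmSub a b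

def TermInT {Fn Pr : Type} (T S : EufTerm Fn Pr) : Prop := SubExpr (.t T) (.t S)
def TermInF {Fn Pr : Type} (T : EufTerm Fn Pr) (F : EufFormula Fn Pr) : Prop :=
  SubExpr (.t T) (.f F)
def FormulaInT {Fn Pr : Type} (G : EufFormula Fn Pr) (S : EufTerm Fn Pr) : Prop :=
  SubExpr (.f G) (.t S)
def FormulaInF {Fn Pr : Type} (G F : EufFormula Fn Pr) : Prop := SubExpr (.f G) (.f F)

def IsAppTerm {Fn Pr : Type} : EufTerm Fn Pr → Prop
  | .app _ _ => True
  | _ => False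

/-- `𝒯(F)`: the function application terms occurring in `F`. -/
def AppTermsF {Fn Pr : Type} (F : EufFormula Fn Pr) : Set (EufTerm Fn Pr) :=
  {T | IsAppTerm T ∧ TermInF T F}

/-- A function symbol occurs in `F` when some application of it occurs in `F`. -/
def FnInF {Fn Pr : Type} (g : Fn) (F : EufFormula Fn Pr) : Prop :=
  ∃ args, TermInF (EufTerm.app g args) F

def PrInF {Fn Pr : Type} (p : Pr) (F : EufFormula Fn Pr) : Prop :=
  ∃ args, FormulaInF (EufFormula.papp p args) F

/-- `I` is diverse for `F` with respect to the set `Sg` of function symbols. -/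
def DiverseFor {Fn Pr D : Type} (I : Interp Fn Pr D) (F : EufFormula Fn Pr)
    (Sg : Set Fn) : Prop :=
  ∀ (g : Fn) (args : List (EufTerm Fn Pr)), g ∈ Sg →
    TermInF (EufTerm.app g args) F →
    ∀ T2 ∈ AppTermsF F, evalT I (EufTerm.app g args) = evalT I T2 →
      ∃ args2, T2 = EufTerm.app g args2 ∧
        List.Forall₂ (fun a b => evalT I a = evalT I b) args args2

mutual
/-- PEUF g-terms, where `isP` designates the p-function symbols. -/
inductive IsGTerm {Fn Pr : Type} (isP : Fn → Prop) : EufTerm Fn Pr → Prop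
  | ite {G : EufFormula Fn Pr} {T1 T2 : EufTerm Fn Pr} :
      IsGFormula isP G → IsGTerm isP T1 → IsGTerm isP T2 → IsGTerm isP (.ite G T1 T2)
  | app {g : Fn} {args : List (EufTerm Fn Pr)} :
      ¬ isP g → (∀ T ∈ args, IsPTerm isP T) → IsGTerm isP (.app g args)
/-- PEUF p-terms. -/
inductive IsPTerm {Fn Pr : Type} (isP : Fn → Prop) : EufTerm Fn Pr → Prop
  | g {T : EufTerm Fn Pr} : IsGTerm isP T → IsPTerm isP T
  | ite {G : EufFormula Fn Pr} {T1 T2 : EufTerm Fn Pr} :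
      IsGFormula isP G → IsPTerm isP T1 → IsPTerm isP T2 → IsPTerm isP (.ite G T1 T2)
  | app {g : Fn} {args : List (EufTerm Fn Pr)} :
      isP g → (∀ T ∈ args, IsPTerm isP T) → IsPTerm isP (.app g args)
/-- PEUF g-formulas. -/
inductive IsGFormula {Fn Pr : Type} (isP : Fn → Prop) : EufFormula Fn Pr → Prop
  | tt : IsGFormula isP .tt
  | ff : IsGFormula isP .ff
  | not {G : EufFormula Fn Pr} : IsGFormula isP G → IsGFormula isP (.not G)
  | and {G1 G2 : EufFormula Fn Pr} :
      IsGFormula isP G1 → IsGFormula isP G2 → IsGFormula isP (.and G1 G2)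
  | or {G1 G2 : EufFormula Fn Pr} :
      IsGFormula isP G1 → IsGFormula isP G2 → IsGFormula isP (.or G1 G2)
  | eq {T1 T2 : EufTerm Fn Pr} :
      IsGTerm isP T1 → IsGTerm isP T2 → IsGFormula isP (.eq T1 T2)
  | papp {p : Pr} {args : List (EufTerm Fn Pr)} :
      (∀ T ∈ args, IsPTerm isP T) → IsGFormula isP (.papp p args)
/-- PEUF p-formulas. -/
inductive IsPFormula {Fn Pr : Type} (isP : Fn → Prop) : EufFormula Fn Pr → Prop
  | g {G : EufFormula Fn Pr} : IsGFormula isP G → IsPFormula isP G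
  | and {G1 G2 : EufFormula Fn Pr} :
      IsPFormula isP G1 → IsPFormula isP G2 → IsPFormula isP (.and G1 G2)
  | or {G1 G2 : EufFormula Fn Pr} :
      IsPFormula isP G1 → IsPFormula isP G2 → IsPFormula isP (.or G1 G2)
  | eq {T1 T2 : EufTerm Fn Pr} :
      IsPTerm isP T1 → IsPTerm isP T2 → IsPFormula isP (.eq T1 T2)
end

/-- The p-function symbols occurring in `F`. -/
def PSymbolsIn {Fn Pr : Type} (isP : Fn → Prop) (F : EufFormula Fn Pr) : Set Fn :=
  {g | isP g ∧ FnInF g F}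

/-- `I` is maximally diverse for the p-formula `F`. -/
def MaxDiverse {Fn Pr D : Type} (isP : Fn → Prop) (I : Interp Fn Pr D)
    (F : EufFormula Fn Pr) : Prop :=
  DiverseFor I F (PSymbolsIn isP F)

/-- `I'` refines `I` on the term set `Ts`. -/
def RefinesOn {Fn Pr D D' : Type} (I' : Interp Fn Pr D') (I : Interp Fn Pr D)
    (Ts : Set (EufTerm Fn Pr)) : Prop :=
  ∀ T1 ∈ Ts, ∀ T2 ∈ Ts, evalT I' T1 = evalT I' T2 → evalT I T1 = evalT I T2

def ProperRefinesOn {Fn Pr D D' : Type} (I' : Interp Fn Pr D') (I : Interp Fn Pr D)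
    (Ts : Set (EufTerm Fn Pr)) : Prop :=
  RefinesOn I' I Ts ∧
    ∃ T1 ∈ Ts, ∃ T2 ∈ Ts, evalT I T1 = evalT I T2 ∧ evalT I' T1 ≠ evalT I' T2
open Classical in
mutual
/-- Substitute the term `B` for each instance of the term `A`. -/
noncomputable def substT {Fn Pr : Type} (A B : EufTerm Fn Pr) : EufTerm Fn Pr → EufTerm Fn Pr
  | .app g args =>
      if EufTerm.app g args = A then B
      else .app g (args.attach.map (fun t => substT A B t.1))
  | .ite G T1 T2 =>
      if EufTerm.ite G T1 T2 = A then B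
      else .ite (substF A B G) (substT A B T1) (substT A B T2)
termination_by t => sizeOf t
decreasing_by
  all_goals simp_wf
  all_goals try omega
  all_goals (have := List.sizeOf_lt_of_mem t.2; omega)
noncomputable def substF {Fn Pr : Type} (A B : EufTerm Fn Pr) : EufFormula Fn Pr → EufFormula Fn Pr
  | .tt => .tt
  | .ff => .ff
  | .not G => .not (substF A B G)
  | .and G1 G2 => .and (substF A B G1) (substF A B G2)
  | .or G1 G2 => .or (substF A B G1) (substF A B G2)
  | .eq T1 T2 => .eq (substT A B T1) (substT A B T2)
  | .papp p args => .papp p (args.attach.map (fun t => substT A B t.1))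
termination_by g => sizeOf g
decreasing_by
  all_goals simp_wf
  all_goals try omega
  all_goals (have := List.sizeOf_lt_of_mem t.2; omega)
end

open Classical in
mutual
/-- Substitute the formula `B` for each instance of the formula `A` inside a term. -/
noncomputable def fsubstT {Fn Pr : Type} (A B : EufFormula Fn Pr) : EufTerm Fn Pr → EufTerm Fn Pr
  | .app g args => .app g (args.attach.map (fun t => fsubstT A B t.1))
  | .ite G T1 T2 => .ite (fsubstF A B G) (fsubstT A B T1) (fsubstT A B T2)
termination_by t => sizeOf t
decreasing_by
  all_goals simp_wf
  all_goals try omega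
  all_goals (have := List.sizeOf_lt_of_mem t.2; omega)
/-- Substitute the formula `B` for each instance of the formula `A`. -/
noncomputable def fsubstF {Fn Pr : Type} (A B : EufFormula Fn Pr) : EufFormula Fn Pr → EufFormula Fn Pr
  | .tt => if EufFormula.tt = A then B else .tt
  | .ff => if EufFormula.ff = A then B else .ff
  | .not G => if EufFormula.not G = A then B else .not (fsubstF A B G)
  | .and G1 G2 => if EufFormula.and G1 G2 = A then B else .and (fsubstF A B G1) (fsubstF A B G2)
  | .or G1 G2 => if EufFormula.or G1 G2 = A then B else .or (fsubstF A B G1) (fsubstF A B G2)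
  | .eq T1 T2 => if EufFormula.eq T1 T2 = A then B else .eq (fsubstT A B T1) (fsubstT A B T2)
  | .papp p args =>
      if EufFormula.papp p args = A then B
      else .papp p (args.attach.map (fun t => fsubstT A B t.1))
termination_by g => sizeOf g
decreasing_by
  all_goals simp_wf
  all_goals try omega
  all_goals (have := List.sizeOf_lt_of_mem t.2; omega)
end
/-- The formula `C_{i,j}`: conjunction of the equations between transformed arguments. -/
def Cform {Fn Pr : Type} (hatS : ℕ → ℕ → EufTerm Fn Pr) (k i j : ℕ) : EufFormula Fn Pr :=
  ((List.range' 1 k).map (fun l => EufFormula.eq (hatS i l) (hatS j l))).foldr .and .tt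

/-- The nested-ITE term `V_{i,j}`. -/
def Vterm {Fn Pr : Type} (vf : ℕ → Fn) (hatS : ℕ → ℕ → EufTerm Fn Pr) (k i : ℕ) :
    ℕ → EufTerm Fn Pr
  | j =>
    if h : j < i then
      .ite (Cform hatS k i j) (.app (vf j) []) (Vterm vf hatS k i (j+1))
    else .app (vf i) []
termination_by j => i - j
decreasing_by omega

/-- The nested-ITE term `U_i` replacing the i-th f-application. -/
def Uterm {Fn Pr : Type} (vf : ℕ → Fn) (hatS : ℕ → ℕ → EufTerm Fn Pr) (k i : ℕ) :
    EufTerm Fn Pr :=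
  Vterm vf hatS k i 1

/-- `stepT … i E = E⁽ⁱ⁾` for terms. -/
noncomputable def stepT {Fn Pr : Type} (Ts : ℕ → EufTerm Fn Pr) (vf : ℕ → Fn)
    (hatS : ℕ → ℕ → EufTerm Fn Pr) (k : ℕ) : ℕ → EufTerm Fn Pr → EufTerm Fn Pr
  | 0, E => E
  | i+1, E =>
      substT (stepT Ts vf hatS k i (Ts (i+1))) (Uterm vf hatS k (i+1)) (stepT Ts vf hatS k i E)

/-- `stepF … i E = E⁽ⁱ⁾` for formulas. -/
noncomputable def stepF {Fn Pr : Type} (Ts : ℕ → EufTerm Fn Pr) (vf : ℕ → Fn)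
    (hatS : ℕ → ℕ → EufTerm Fn Pr) (k : ℕ) : ℕ → EufFormula Fn Pr → EufFormula Fn Pr
  | 0, E => E
  | i+1, E =>
      substF (stepT Ts vf hatS k i (Ts (i+1))) (Uterm vf hatS k (i+1)) (stepF Ts vf hatS k i E)

/-- The f-order of a term: the largest index `i ∈ [1,n]` with `Ts i` occurring in `E`. -/
noncomputable def fordT {Fn Pr : Type} (n : ℕ) (Ts : ℕ → EufTerm Fn Pr)
    (E : EufTerm Fn Pr) : ℕ :=
  sSup {i | 1 ≤ i ∧ i ≤ n ∧ TermInT (Ts i) E}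

/-- The f-order of a formula. -/
noncomputable def fordF {Fn Pr : Type} (n : ℕ) (Ts : ℕ → EufTerm Fn Pr)
    (E : EufFormula Fn Pr) : ℕ :=
  sSup {i | 1 ≤ i ∧ i ≤ n ∧ TermInF (Ts i) E}

/-- `Ê` for terms: `E⁽ᵐ⁾` where `m` is the f-order of `E`. -/
noncomputable def hatT {Fn Pr : Type} (n : ℕ) (Ts : ℕ → EufTerm Fn Pr) (vf : ℕ → Fn)
    (hatS : ℕ → ℕ → EufTerm Fn Pr) (k : ℕ) (E : EufTerm Fn Pr) : EufTerm Fn Pr :=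
  stepT Ts vf hatS k (fordT n Ts E) E

/-- `Ê` for formulas. -/
noncomputable def hatF {Fn Pr : Type} (n : ℕ) (Ts : ℕ → EufTerm Fn Pr) (vf : ℕ → Fn)
    (hatS : ℕ → ℕ → EufTerm Fn Pr) (k : ℕ) (E : EufFormula Fn Pr) : EufFormula Fn Pr :=
  stepF Ts vf hatS k (fordF n Ts E) E

/-- Hypotheses of the nested-ITE elimination of the function symbol `f` from `G`:
`Ts 1, …, Ts n` are the syntactically distinct f-application terms of `G` (ordered so that
subterms precede superterms) with argument terms `S i 1, …, S i k`; the `vf i` are fresh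
domain variables; and `hatS i l` is the transformed argument term `Ŝ_{i,l}`. -/
structure ElimHyps {Fn Pr : Type} (G : EufFormula Fn Pr) (f : Fn) (k n : ℕ)
    (Ts : ℕ → EufTerm Fn Pr) (S : ℕ → ℕ → EufTerm Fn Pr) (vf : ℕ → Fn)
    (hatS : ℕ → ℕ → EufTerm Fn Pr) : Prop where
  k_pos : 1 ≤ k
  ts_app : ∀ i, 1 ≤ i → i ≤ n → Ts i = EufTerm.app f ((List.range' 1 k).map (S i))
  ts_occurs : ∀ i, 1 ≤ i → i ≤ n → TermInF (Ts i) G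
  ts_distinct : ∀ i j, 1 ≤ i → i ≤ n → 1 ≤ j → j ≤ n → Ts i = Ts j → i = j
  ts_complete : ∀ args, TermInF (EufTerm.app f args) G →
      ∃ i, 1 ≤ i ∧ i ≤ n ∧ EufTerm.app f args = Ts i
  ts_order : ∀ i j, 1 ≤ i → i ≤ n → 1 ≤ j → j ≤ n → TermInT (Ts i) (Ts j) → i ≠ j → i < j
  vf_fresh : ∀ i, 1 ≤ i → i ≤ n → ¬ FnInF (vf i) G
  vf_inj : ∀ i j, 1 ≤ i → i ≤ n → 1 ≤ j → j ≤ n → vf i = vf j → i = j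
  vf_ne_f : ∀ i, 1 ≤ i → i ≤ n → vf i ≠ f
  hatS_spec : ∀ j l, 1 ≤ j → j ≤ n → 1 ≤ l → l ≤ k →
      hatS j l = stepT Ts vf hatS k (fordT n Ts (S j l)) (S j l)

/-- `Ĝ = G⁽ⁿ⁾`: the result of eliminating `f` from `G`. -/
noncomputable def elimResult {Fn Pr : Type} (G : EufFormula Fn Pr) (n : ℕ)
    (Ts : ℕ → EufTerm Fn Pr) (vf : ℕ → Fn) (hatS : ℕ → ℕ → EufTerm Fn Pr) (k : ℕ) :
    EufFormula Fn Pr :=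
  stepF Ts vf hatS k n G

/-!
Away from the terms it replaces, elimination commutes with all term and formula constructors. It is
injective on the terms of `G`: a term `U_i` ends in the leaf `vf_i`, and as the `vf_i` do not occur
in `G`, no term other than `T_i` is mapped to `U_i`. Hence the first `i` steps replace exactly
`T_1, …, T_i`, and every application term of `Ĝ` is a variable `vf_i` or comes from an application
in `G` of a symbol other than `f`.

The interpretation `Ĵ` extends `J` by fresh values. It gives `vf_i` the value of `T_i` if `T_i` is
the first application of `f` with its argument values, and a fresh value otherwise. Evaluating `U_i`
selects the first application with the argument values of `T_i`, so `U_i` has the value of `T_i`.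
As `J` is diverse and `f ∈ Σ`, first applications have distinct values, which no application of
another symbol shares; so the values of the `vf_i` are pairwise distinct and shared by no other
application term of `Ĝ`.
-/

section Subexpressions

variable {Fn Pr : Type}

theorem ImmSub.sizeOf_lt {a b : EufExpr Fn Pr} (h : ImmSub a b) : sizeOf a < sizeOf b := by
  cases h <;> simp <;> try omega
  all_goals
    rename_i h
    have := List.sizeOf_lt_of_mem h
    omega

theorem wellFounded_immSub : WellFounded (ImmSub (Fn := Fn) (Pr := Pr)) :=
  Subrelation.wf ImmSub.sizeOf_lt (measure sizeOf).wf

theorem SubExpr.sizeOf_le {a b : EufExpr Fn Pr} (h : SubExpr a b) : sizeOf a ≤ sizeOf b := by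
  induction h with
  | refl => exact le_rfl
  | tail _ h ih => exact ih.trans h.sizeOf_lt.le

theorem ImmSub.trans_subExpr {a b c : EufExpr Fn Pr} (h : ImmSub a b) (h' : SubExpr b c) :
    SubExpr a c :=
  Relation.ReflTransGen.head h h'

theorem subExpr_iff {a c : EufExpr Fn Pr} :
    SubExpr a c ↔ a = c ∨ ∃ b, SubExpr a b ∧ ImmSub b c :=
  (Relation.ReflTransGen.cases_tail_iff ImmSub a c).trans (or_congr_left eq_comm)

variable {X : EufTerm Fn Pr}

theorem termInT_app_iff {g : Fn} {args : List (EufTerm Fn Pr)} :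
    TermInT X (.app g args) ↔ X = .app g args ∨ ∃ a ∈ args, TermInT X a := by
  refine subExpr_iff.trans (or_congr (by simp) ⟨?_, ?_⟩)
  · rintro ⟨_, hX, ⟨ha⟩⟩
    exact ⟨_, ha, hX⟩
  · rintro ⟨a, ha, hX⟩
    exact ⟨_, hX, .appArg ha⟩

theorem termInT_ite_iff {C : EufFormula Fn Pr} {a b : EufTerm Fn Pr} :
    TermInT X (.ite C a b) ↔ X = .ite C a b ∨ TermInF X C ∨ TermInT X a ∨ TermInT X b := by
  refine subExpr_iff.trans (or_congr (by simp) ⟨?_, ?_⟩)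
  · rintro ⟨_, hX, _ | _ | _⟩
    exacts [.inl hX, .inr (.inl hX), .inr (.inr hX)]
  · rintro (hX | hX | hX)
    exacts [⟨_, hX, .iteC⟩, ⟨_, hX, .ite1⟩, ⟨_, hX, .ite2⟩]

theorem not_termInF_tt : ¬ TermInF X .tt := by
  rw [TermInF, subExpr_iff]
  rintro (h | ⟨_, _, h⟩) <;> cases h

theorem not_termInF_ff : ¬ TermInF X .ff := by
  rw [TermInF, subExpr_iff]
  rintro (h | ⟨_, _, h⟩) <;> cases h

theorem termInF_not_iff {F : EufFormula Fn Pr} : TermInF X (.not F) ↔ TermInF X F := by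
  refine subExpr_iff.trans ⟨?_, fun hX => .inr ⟨_, hX, .not⟩⟩
  rintro (h | ⟨_, hX, ⟨⟩⟩)
  exacts [(nomatch h), hX]

theorem termInF_and_iff {F₁ F₂ : EufFormula Fn Pr} :
    TermInF X (.and F₁ F₂) ↔ TermInF X F₁ ∨ TermInF X F₂ := by
  refine subExpr_iff.trans ⟨?_, ?_⟩
  · rintro (h | ⟨_, hX, _ | _⟩)
    exacts [(nomatch h), .inl hX, .inr hX]
  · rintro (hX | hX)
    exacts [.inr ⟨_, hX, .andL⟩, .inr ⟨_, hX, .andR⟩]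

theorem termInF_or_iff {F₁ F₂ : EufFormula Fn Pr} :
    TermInF X (.or F₁ F₂) ↔ TermInF X F₁ ∨ TermInF X F₂ := by
  refine subExpr_iff.trans ⟨?_, ?_⟩
  · rintro (h | ⟨_, hX, _ | _⟩)
    exacts [(nomatch h), .inl hX, .inr hX]
  · rintro (hX | hX)
    exacts [.inr ⟨_, hX, .orL⟩, .inr ⟨_, hX, .orR⟩]

theorem termInF_eq_iff {T₁ T₂ : EufTerm Fn Pr} :
    TermInF X (.eq T₁ T₂) ↔ TermInT X T₁ ∨ TermInT X T₂ := by
  refine subExpr_iff.trans ⟨?_, ?_⟩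
  · rintro (h | ⟨_, hX, _ | _⟩)
    exacts [(nomatch h), .inl hX, .inr hX]
  · rintro (hX | hX)
    exacts [.inr ⟨_, hX, .eqL⟩, .inr ⟨_, hX, .eqR⟩]

theorem termInF_papp_iff {p : Pr} {args : List (EufTerm Fn Pr)} :
    TermInF X (.papp p args) ↔ ∃ a ∈ args, TermInT X a := by
  refine subExpr_iff.trans ⟨?_, fun ⟨_, ha, hX⟩ => .inr ⟨_, hX, .pappArg ha⟩⟩
  rintro (h | ⟨_, hX, h⟩)
  · cases h
  · cases h with
    | pappArg ha => exact ⟨_, ha, hX⟩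

theorem termInF_foldr_and_iff {L : List (EufFormula Fn Pr)} :
    TermInF X (L.foldr .and .tt) ↔ ∃ F ∈ L, TermInF X F := by
  induction L with
  | nil => simp [not_termInF_tt]
  | cons F L ih => simp [termInF_and_iff, ih]

theorem subExpr_induction {e₀ : EufExpr Fn Pr}
    {P : EufTerm Fn Pr → Prop} {Q : EufFormula Fn Pr → Prop}
    (app : ∀ g args, SubExpr (.t (.app g args)) e₀ → (∀ a ∈ args, P a) → P (.app g args))
    (ite : ∀ C a b, SubExpr (.t (.ite C a b)) e₀ → Q C → P a → P b → P (.ite C a b))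
    (tt : Q .tt) (ff : Q .ff) (not : ∀ F, Q F → Q (.not F))
    (and : ∀ F₁ F₂, Q F₁ → Q F₂ → Q (.and F₁ F₂)) (or : ∀ F₁ F₂, Q F₁ → Q F₂ → Q (.or F₁ F₂))
    (eq : ∀ T₁ T₂, P T₁ → P T₂ → Q (.eq T₁ T₂))
    (papp : ∀ p args, (∀ a ∈ args, P a) → Q (.papp p args)) :
    (∀ T, SubExpr (.t T) e₀ → P T) ∧ ∀ F, SubExpr (.f F) e₀ → Q F := by
  let motive : EufExpr Fn Pr → Prop
    | .t T => P T
    | .f F => Q F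
  suffices h : ∀ e, SubExpr e e₀ → motive e from ⟨fun T => h (.t T), fun F => h (.f F)⟩
  intro e
  induction e using wellFounded_immSub.induction with
  | _ e ih =>
  intro he
  have ih' : ∀ e', ImmSub e' e → motive e' := fun e' h => ih e' h (h.trans_subExpr he)
  match e with
  | .t (.app g args) => exact app g args he fun a ha => ih' (.t a) (.appArg ha)
  | .t (.ite C a b) =>
    exact ite C a b he (ih' (.f C) .iteC) (ih' (.t a) .ite1) (ih' (.t b) .ite2)
  | .f .tt => exact tt
  | .f .ff => exact ff
  | .f (.not F) => exact not F (ih' (.f F) .not)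
  | .f (.and F₁ F₂) => exact and F₁ F₂ (ih' (.f F₁) .andL) (ih' (.f F₂) .andR)
  | .f (.or F₁ F₂) => exact or F₁ F₂ (ih' (.f F₁) .orL) (ih' (.f F₂) .orR)
  | .f (.eq T₁ T₂) => exact eq T₁ T₂ (ih' (.t T₁) .eqL) (ih' (.t T₂) .eqR)
  | .f (.papp p args) => exact papp p args fun a ha => ih' (.t a) (.pappArg ha)

end Subexpressions

section Evaluation

variable {Fn Pr D : Type} (I : Interp Fn Pr D)

theorem evalT_app (g : Fn) (args : List (EufTerm Fn Pr)) :
    evalT I (.app g args) = I.fn g (args.map (evalT I)) := by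
  rw [evalT, List.attach_map_val]

theorem evalF_papp (p : Pr) (args : List (EufTerm Fn Pr)) :
    evalF I (.papp p args) = I.pr p (args.map (evalT I)) := by
  rw [evalF, List.attach_map_val]

theorem evalF_foldr_and (L : List (EufFormula Fn Pr)) :
    evalF I (L.foldr .and .tt) = true ↔ ∀ F ∈ L, evalF I F = true := by
  induction L with
  | nil => simp [evalF]
  | cons F L ih => simp [evalF, ih]

theorem diverseFor_iff {I : Interp Fn Pr D} {F : EufFormula Fn Pr} {Sg : Set Fn} :
    DiverseFor I F Sg ↔ ∀ g args, g ∈ Sg → TermInF (.app g args) F →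
      ∀ g' args', TermInF (.app g' args') F →
        I.fn g (args.map (evalT I)) = I.fn g' (args'.map (evalT I)) →
          g' = g ∧ args.map (evalT I) = args'.map (evalT I) := by
  have forall₂_iff (l l' : List (EufTerm Fn Pr)) :
      List.Forall₂ (fun a b => evalT I a = evalT I b) l l' ↔
        l.map (evalT I) = l'.map (evalT I) := by
    rw [← List.forall₂_eq_eq_eq, List.forall₂_map_left_iff, List.forall₂_map_right_iff]
  refine forall₄_congr fun g args _ _ => ⟨fun h g' args' h' heq => ?_, fun h T hT heq => ?_⟩
  · obtain ⟨_, hT, hargs⟩ := h (.app g' args') ⟨trivial, h'⟩ (by simpa only [evalT_app] using heq)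
    cases hT
    exact ⟨rfl, (forall₂_iff _ _).1 hargs⟩
  · match T, hT with
    | .app g' args', ⟨_, hT⟩ =>
      obtain ⟨rfl, hargs⟩ := h g' args' hT (by simpa only [evalT_app] using heq)
      exact ⟨args', rfl, (forall₂_iff _ _).2 hargs⟩

end Evaluation

section Transformation

variable {Fn Pr : Type}

/-- A pair of maps on terms and formulas is a homomorphism for all constructors, except at the
terms of `R`, on which the term map is arbitrary. Substitutions and their compositions have this
form, `R` consisting of the terms that get replaced. -/
structure CommutesOutside (R : Set (EufTerm Fn Pr)) (τ : EufTerm Fn Pr → EufTerm Fn Pr)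
    (φ : EufFormula Fn Pr → EufFormula Fn Pr) : Prop where
  app : ∀ g args, EufTerm.app g args ∉ R → τ (.app g args) = .app g (args.map τ)
  ite : ∀ C a b, EufTerm.ite C a b ∉ R → τ (.ite C a b) = .ite (φ C) (τ a) (τ b)
  tt : φ .tt = .tt
  ff : φ .ff = .ff
  not : ∀ F, φ (.not F) = .not (φ F)
  and : ∀ F₁ F₂, φ (.and F₁ F₂) = .and (φ F₁) (φ F₂)
  or : ∀ F₁ F₂, φ (.or F₁ F₂) = .or (φ F₁) (φ F₂)
  eq : ∀ T₁ T₂, φ (.eq T₁ T₂) = .eq (τ T₁) (τ T₂)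
  papp : ∀ p args, φ (.papp p args) = .papp p (args.map τ)

theorem substT_self {A B : EufTerm Fn Pr} : substT A B A = B := by
  cases A <;> rw [substT, if_pos rfl]

theorem eq_of_map_eq_map {α β : Type*} {f : α → β} {l l' : List α}
    (hf : ∀ a ∈ l, ∀ b ∈ l', f a = f b → a = b) (h : l.map f = l'.map f) : l = l' := by
  induction l generalizing l' with
  | nil => simpa using h.symm
  | cons a l ih =>
    match l', h with
    | b :: l', h =>
      obtain ⟨hab, htail⟩ := List.cons.inj h
      rw [hf a (by simp) b (by simp) hab,
        ih (fun x hx y hy => hf x (by simp [hx]) y (by simp [hy])) htail]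

theorem eq_of_apply_eq_of_mem {α β : Type*} {s t : Set α} {f : α → β}
    (ht : ∀ x ∈ t, x ∈ s → ∀ y ∈ s, f y = f x → y = x) {x y : α} (hx : x ∈ s) (hy : y ∈ s)
    (h : f x = f y) (hxy : x ∉ t → y ∉ t → x = y) : x = y := by
  by_cases hxt : x ∈ t
  · exact (ht x hxt hx y hy h.symm).symm
  by_cases hyt : y ∈ t
  · exact ht y hyt hy x hx h
  exact hxy hxt hyt

namespace CommutesOutside

theorem id : CommutesOutside (∅ : Set (EufTerm Fn Pr)) (fun T => T) (fun F => F) := by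
  constructor <;> simp

theorem subst (A B : EufTerm Fn Pr) : CommutesOutside {A} (substT A B) (substF A B) where
  app g args h := by rw [substT, if_neg (by simpa using h), List.attach_map_val]
  ite C a b h := by rw [substT, if_neg (by simpa using h)]
  tt := by rw [substF]
  ff := by rw [substF]
  not F := by rw [substF]
  and F₁ F₂ := by rw [substF]
  or F₁ F₂ := by rw [substF]
  eq T₁ T₂ := by rw [substF]
  papp p args := by rw [substF, List.attach_map_val]

variable {R R' : Set (EufTerm Fn Pr)} {τ τ' : EufTerm Fn Pr → EufTerm Fn Pr}
  {φ φ' : EufFormula Fn Pr → EufFormula Fn Pr} {e₀ : EufExpr Fn Pr}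

theorem comp (h' : CommutesOutside R' τ' φ') (h : CommutesOutside R τ φ) :
    CommutesOutside (R ∪ τ ⁻¹' R') (fun T => τ' (τ T)) (fun F => φ' (φ F)) where
  app g args hT := by
    have hT' : τ (.app g args) ∉ R' := fun hm => hT (.inr hm)
    rw [h.app g args fun hm => hT (.inl hm)] at hT' ⊢
    rw [h'.app _ _ hT', List.map_map, Function.comp_def]
  ite C a b hT := by
    have hT' : τ (.ite C a b) ∉ R' := fun hm => hT (.inr hm)
    rw [h.ite C a b fun hm => hT (.inl hm)] at hT' ⊢
    rw [h'.ite _ _ _ hT']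
  tt := by rw [h.tt, h'.tt]
  ff := by rw [h.ff, h'.ff]
  not F := by rw [h.not, h'.not]
  and F₁ F₂ := by rw [h.and, h'.and]
  or F₁ F₂ := by rw [h.or, h'.or]
  eq T₁ T₂ := by rw [h.eq, h'.eq]
  papp p args := by rw [h.papp, h'.papp, List.map_map, Function.comp_def]

theorem eq_self (h : CommutesOutside R τ φ) {T : EufTerm Fn Pr}
    (hT : ∀ X ∈ R, ¬ TermInT X T) : τ T = T := by
  have map_eq {args : List (EufTerm Fn Pr)} (ih : ∀ a ∈ args, τ a = a) : args.map τ = args := by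
    rw [List.map_congr_left ih, List.map_id']
  refine (subExpr_induction (e₀ := .t T) (P := fun X => τ X = X) (Q := fun F => φ F = F)
    ?_ ?_ h.tt h.ff ?_ ?_ ?_ ?_ ?_).1 T .refl
  · intro g args hX ih
    rw [h.app g args fun hR => hT _ hR hX, map_eq ih]
  · intro C a b hX hC ha hb
    rw [h.ite C a b fun hR => hT _ hR hX, hC, ha, hb]
  · intro F hF
    rw [h.not, hF]
  · intro F₁ F₂ h₁ h₂
    rw [h.and, h₁, h₂]
  · intro F₁ F₂ h₁ h₂
    rw [h.or, h₁, h₂]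
  · intro T₁ T₂ h₁ h₂
    rw [h.eq, h₁, h₂]
  · intro p args ih
    rw [h.papp, map_eq ih]

theorem app_origin (h : CommutesOutside R τ φ) {g : Fn} {args : List (EufTerm Fn Pr)}
    {C : Prop}
    (replaced : ∀ X ∈ R, SubExpr (.t X) e₀ → TermInT (.app g args) (τ X) → C)
    (mapped : ∀ as, SubExpr (.t (.app g as)) e₀ → EufTerm.app g as ∉ R → args = as.map τ → C) :
    (∀ T, SubExpr (.t T) e₀ → TermInT (.app g args) (τ T) → C) ∧
      ∀ F, SubExpr (.f F) e₀ → TermInF (.app g args) (φ F) → C := by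
  refine subExpr_induction (P := fun T => TermInT (.app g args) (τ T) → C)
    (Q := fun F => TermInF (.app g args) (φ F) → C) ?_ ?_ ?_ ?_ ?_ ?_ ?_ ?_ ?_
  · intro g' as hX ih hocc
    by_cases hR : EufTerm.app g' as ∈ R
    · exact replaced _ hR hX hocc
    rw [h.app _ _ hR, termInT_app_iff] at hocc
    simp only [List.mem_map, exists_exists_and_eq_and] at hocc
    rcases hocc with heq | ⟨a, ha, hocc⟩
    · cases heq
      exact mapped as hX hR rfl
    · exact ih a ha hocc
  · intro C a b hX hC ha hb hocc
    by_cases hR : EufTerm.ite C a b ∈ R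
    · exact replaced _ hR hX hocc
    rw [h.ite _ _ _ hR, termInT_ite_iff] at hocc
    rcases hocc with heq | hocc | hocc | hocc
    exacts [(nomatch heq), hC hocc, ha hocc, hb hocc]
  · rw [h.tt]
    exact fun hocc => absurd hocc not_termInF_tt
  · rw [h.ff]
    exact fun hocc => absurd hocc not_termInF_ff
  · intro F hF
    rwa [h.not, termInF_not_iff]
  · intro F₁ F₂ h₁ h₂
    rw [h.and, termInF_and_iff]
    exact Or.rec h₁ h₂
  · intro F₁ F₂ h₁ h₂
    rw [h.or, termInF_or_iff]
    exact Or.rec h₁ h₂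
  · intro T₁ T₂ h₁ h₂
    rw [h.eq, termInF_eq_iff]
    exact Or.rec h₁ h₂
  · intro p as ih hocc
    rw [h.papp, termInF_papp_iff] at hocc
    simp only [List.mem_map, exists_exists_and_eq_and] at hocc
    obtain ⟨a, ha, hocc⟩ := hocc
    exact ih a ha hocc

theorem injOn (h : CommutesOutside R τ φ)
    (hR : ∀ X ∈ R, SubExpr (.t X) e₀ → ∀ T, SubExpr (.t T) e₀ → τ T = τ X → T = X) :
    Set.InjOn τ {T | SubExpr (.t T) e₀} := by
  let InjAtF (F : EufFormula Fn Pr) := ∀ F', SubExpr (.f F') e₀ → φ F = φ F' → F = F'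
  let InjAtT (T : EufTerm Fn Pr) := ∀ T', SubExpr (.t T') e₀ → τ T = τ T' → T = T'
  suffices hinj : ∀ T, SubExpr (.t T) e₀ → InjAtT T from fun T hT T' hT' => hinj T hT T' hT'
  refine (subExpr_induction (P := InjAtT) (Q := InjAtF) (fun g args hT ih => ?_)
    (fun C a b hT hC ha hb => ?_) ?_ ?_ (fun F ih => ?_) (fun F₁ F₂ ih₁ ih₂ => ?_)
    (fun F₁ F₂ ih₁ ih₂ => ?_) (fun T₁ T₂ ih₁ ih₂ => ?_) (fun p args ih => ?_)).1
  · refine fun T' hT' heq => eq_of_apply_eq_of_mem hR hT hT' heq fun hTR hTR' => ?_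
    rw [h.app _ _ hTR] at heq
    match T' with
    | .app g' args' =>
      rw [h.app _ _ hTR', EufTerm.app.injEq] at heq
      rw [heq.1, eq_of_map_eq_map
        (fun a ha b hb => ih a ha b ((ImmSub.appArg hb).trans_subExpr hT')) heq.2]
    | .ite C a b => simp [h.ite _ _ _ hTR'] at heq
  · refine fun T' hT' heq => eq_of_apply_eq_of_mem hR hT hT' heq fun hTR hTR' => ?_
    rw [h.ite _ _ _ hTR] at heq
    match T' with
    | .app g' args' => simp [h.app _ _ hTR'] at heq
    | .ite C' a' b' =>
      rw [h.ite _ _ _ hTR', EufTerm.ite.injEq] at heq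
      rw [hC C' (ImmSub.iteC.trans_subExpr hT') heq.1,
        ha a' (ImmSub.ite1.trans_subExpr hT') heq.2.1,
        hb b' (ImmSub.ite2.trans_subExpr hT') heq.2.2]
  all_goals rintro (_ | _ | F' | ⟨F₁', F₂'⟩ | ⟨F₁', F₂'⟩ | ⟨T₁', T₂'⟩ | ⟨p', args'⟩) hF' heq <;>
      simp only [h.tt, h.ff, h.not, h.and, h.or, h.eq, h.papp, reduceCtorEq, EufFormula.not.injEq,
        EufFormula.and.injEq, EufFormula.or.injEq, EufFormula.eq.injEq,
        EufFormula.papp.injEq] at heq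
  · rfl
  · rfl
  · rw [ih F' (ImmSub.not.trans_subExpr hF') heq]
  · rw [ih₁ F₁' (ImmSub.andL.trans_subExpr hF') heq.1,
      ih₂ F₂' (ImmSub.andR.trans_subExpr hF') heq.2]
  · rw [ih₁ F₁' (ImmSub.orL.trans_subExpr hF') heq.1, ih₂ F₂' (ImmSub.orR.trans_subExpr hF') heq.2]
  · rw [ih₁ T₁' (ImmSub.eqL.trans_subExpr hF') heq.1, ih₂ T₂' (ImmSub.eqR.trans_subExpr hF') heq.2]
  · rw [heq.1, eq_of_map_eq_map
      (fun a ha b hb => ih a ha b ((ImmSub.pappArg hb).trans_subExpr hF')) heq.2]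

theorem eval (h : CommutesOutside R τ φ) {D D' : Type} {I : Interp Fn Pr D}
    {I' : Interp Fn Pr D'} {ι : D → D'} (hι : Function.Injective ι)
    (fn : ∀ g as, SubExpr (.t (.app g as)) e₀ → EufTerm.app g as ∉ R →
      ∀ vs, I'.fn g (vs.map ι) = ι (I.fn g vs))
    (pr : ∀ p vs, I'.pr p (vs.map ι) = I.pr p vs)
    (replaced : ∀ X ∈ R, SubExpr (.t X) e₀ → evalT I' (τ X) = ι (evalT I X)) :
    (∀ T, SubExpr (.t T) e₀ → evalT I' (τ T) = ι (evalT I T)) ∧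
      ∀ F, SubExpr (.f F) e₀ → evalF I' (φ F) = evalF I F := by
  have map_eval {args : List (EufTerm Fn Pr)}
      (ih : ∀ a ∈ args, evalT I' (τ a) = ι (evalT I a)) :
      (args.map τ).map (evalT I') = (args.map (evalT I)).map ι := by
    simpa only [List.map_map, List.map_inj_left, Function.comp_apply] using ih
  refine subExpr_induction (P := fun T => evalT I' (τ T) = ι (evalT I T))
    (Q := fun F => evalF I' (φ F) = evalF I F) ?_ ?_ ?_ ?_ ?_ ?_ ?_ ?_ ?_
  · intro g args hX ih
    by_cases hR : EufTerm.app g args ∈ R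
    · exact replaced _ hR hX
    · rw [h.app _ _ hR, evalT_app, evalT_app, map_eval ih, fn g args hX hR]
  · intro C a b hX hC ha hb
    by_cases hR : EufTerm.ite C a b ∈ R
    · exact replaced _ hR hX
    · rw [h.ite _ _ _ hR, evalT, evalT, hC, ha, hb, apply_ite ι]
  · rw [h.tt, evalF, evalF]
  · rw [h.ff, evalF, evalF]
  · intro F hF
    rw [h.not, evalF, evalF, hF]
  · intro F₁ F₂ h₁ h₂
    rw [h.and, evalF, evalF, h₁, h₂]
  · intro F₁ F₂ h₁ h₂
    rw [h.or, evalF, evalF, h₁, h₂]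
  · intro T₁ T₂ h₁ h₂
    rw [h.eq, evalF, evalF, h₁, h₂]
    exact decide_eq_decide.2 hι.eq_iff
  · intro p args ih
    rw [h.papp, evalF_papp, evalF_papp, map_eval ih, pr]

end CommutesOutside

end Transformation

section NestedIte

variable {Fn Pr : Type} {vf : ℕ → Fn} {hatS : ℕ → ℕ → EufTerm Fn Pr} {k : ℕ}

theorem Vterm_of_lt {i j : ℕ} (h : j < i) : Vterm vf hatS k i j =
    .ite (Cform hatS k i j) (.app (vf j) []) (Vterm vf hatS k i (j + 1)) := by
  rw [Vterm, dif_pos h]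

theorem Vterm_self {i : ℕ} : Vterm vf hatS k i i = .app (vf i) [] := by
  rw [Vterm, dif_neg (lt_irrefl i)]

theorem exists_termInT_of_termInF_Cform {X : EufTerm Fn Pr} {i j : ℕ}
    (h : TermInF X (Cform hatS k i j)) :
    ∃ m ∈ ({i, j} : Set ℕ), ∃ l ∈ Set.Icc 1 k, TermInT X (hatS m l) := by
  obtain ⟨_, hmem, hX⟩ := termInF_foldr_and_iff.1 h
  obtain ⟨l, hl, rfl⟩ := List.mem_map.1 hmem
  have hl' : l ∈ Set.Icc 1 k := ⟨(List.mem_range'_1.1 hl).1, by grind⟩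
  rcases termInF_eq_iff.1 hX with hX | hX
  exacts [⟨i, .inl rfl, l, hl', hX⟩, ⟨j, .inr rfl, l, hl', hX⟩]

theorem var_or_termInT_of_termInT_Vterm {g : Fn} {args : List (EufTerm Fn Pr)} {i j : ℕ}
    (hj : 1 ≤ j) (hji : j ≤ i) (h : TermInT (.app g args) (Vterm vf hatS k i j)) :
    (∃ m ∈ Set.Icc 1 i, g = vf m ∧ args = []) ∨
      ∃ m ∈ Set.Icc 1 i, ∃ l ∈ Set.Icc 1 k, TermInT (.app g args) (hatS m l) := by
  have leaf {m : ℕ} (hm : m ∈ Set.Icc 1 i) (h : TermInT (.app g args) (.app (vf m) [])) :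
      ∃ m ∈ Set.Icc 1 i, g = vf m ∧ args = [] :=
    ⟨m, hm, by simpa [termInT_app_iff] using h⟩
  induction hji using Nat.decreasingInduction with
  | self =>
    rw [Vterm_self] at h
    exact .inl (leaf ⟨hj, le_rfl⟩ h)
  | of_succ j hlt ih =>
    rw [Vterm_of_lt hlt, termInT_ite_iff] at h
    rcases h with h | h | h | h
    · cases h
    · obtain ⟨m, hm, hl⟩ := exists_termInT_of_termInF_Cform h
      exact .inr ⟨m, by rcases hm with rfl | rfl <;> grind, hl⟩
    · exact .inl (leaf ⟨hj, hlt.le⟩ h)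
    · exact ih (by omega) h

theorem Vterm_injective {n : ℕ} (hvf : (Set.Icc 1 n).InjOn vf) {i i' j j' : ℕ}
    (hj : 1 ≤ j) (hji : j ≤ i) (hi : i ≤ n) (hj' : 1 ≤ j') (hji' : j' ≤ i') (hi' : i' ≤ n)
    (h : Vterm vf hatS k i j = Vterm vf hatS k i' j') : i = i' ∧ j = j' := by
  induction hji using Nat.decreasingInduction generalizing j' with
  | self =>
    rcases hji'.eq_or_lt with rfl | hlt'
    · rw [Vterm_self, Vterm_self, EufTerm.app.injEq] at h
      have := hvf ⟨hj, hi⟩ ⟨hj', hi'⟩ h.1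
      exact ⟨this, this⟩
    · rw [Vterm_self, Vterm_of_lt hlt'] at h
      cases h
  | of_succ j hlt ih =>
    rcases hji'.eq_or_lt with rfl | hlt'
    · rw [Vterm_self, Vterm_of_lt hlt] at h
      cases h
    · rw [Vterm_of_lt hlt, Vterm_of_lt hlt', EufTerm.ite.injEq, EufTerm.app.injEq] at h
      have hjj : j = j' := hvf ⟨hj, by omega⟩ ⟨hj', by omega⟩ h.2.1.1
      exact ⟨(ih (by omega) (by omega) hlt' h.2.2).1, hjj⟩

end NestedIte

section Steps

variable {Fn Pr : Type} (Ts : ℕ → EufTerm Fn Pr) (vf : ℕ → Fn) (hatS : ℕ → ℕ → EufTerm Fn Pr)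
  (k : ℕ)

/-- The terms turned into some `Uterm (j + 1)` during the first `i` elimination steps: step `j + 1`
replaces every instance of `stepT j (Ts (j + 1))`. -/
def replaced (i : ℕ) : Set (EufTerm Fn Pr) :=
  {T | ∃ j < i, stepT Ts vf hatS k j T = stepT Ts vf hatS k j (Ts (j + 1))}

theorem replaced_succ (i : ℕ) : replaced Ts vf hatS k (i + 1) =
    replaced Ts vf hatS k i ∪ stepT Ts vf hatS k i ⁻¹' {stepT Ts vf hatS k i (Ts (i + 1))} := by
  ext T
  simp only [replaced, Nat.lt_succ_iff_lt_or_eq, Set.mem_ofPred_eq, Set.mem_union, Set.mem_preimage,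
    Set.mem_singleton_iff, or_and_right, exists_or, exists_eq_left]

theorem commutesOutside_stepT (i : ℕ) : CommutesOutside (replaced Ts vf hatS k i)
    (stepT Ts vf hatS k i) (stepF Ts vf hatS k i) := by
  induction i with
  | zero =>
    have : replaced Ts vf hatS k 0 = ∅ := by simp [replaced]
    rw [this]
    exact .id
  | succ i ih =>
    rw [replaced_succ]
    exact (CommutesOutside.subst _ _).comp ih

variable {Ts vf hatS k}

theorem mem_replaced {i j : ℕ} (hj : j ∈ Set.Icc 1 i) : Ts j ∈ replaced Ts vf hatS k i :=
  ⟨j - 1, by grind, by rw [Nat.sub_add_cancel hj.1]⟩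

end Steps

section Elimination

variable {Fn Pr : Type} {G : EufFormula Fn Pr} {f : Fn} {k n : ℕ} {Ts : ℕ → EufTerm Fn Pr}
  {S : ℕ → ℕ → EufTerm Fn Pr} {vf : ℕ → Fn} {hatS : ℕ → ℕ → EufTerm Fn Pr}

theorem le_fordT {T : EufTerm Fn Pr} {m : ℕ} (hm : m ∈ Set.Icc 1 n) (h : TermInT (Ts m) T) :
    m ≤ fordT n Ts T :=
  le_csSup ⟨n, fun _ hi => hi.2.1⟩ ⟨hm.1, hm.2, h⟩

namespace ElimHyps

variable (he : ElimHyps G f k n Ts S vf hatS)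
include he

theorem injOn_vf : (Set.Icc 1 n).InjOn vf := fun i hi j hj => he.vf_inj i j hi.1 hi.2 hj.1 hj.2

theorem immSub_arg {j l : ℕ} (hj : j ∈ Set.Icc 1 n) (hl : l ∈ Set.Icc 1 k) :
    ImmSub (.t (S j l)) (.t (Ts j)) := by
  rw [he.ts_app j hj.1 hj.2]
  exact .appArg (List.mem_map_of_mem (by grind))

theorem termInF_arg {j l : ℕ} (hj : j ∈ Set.Icc 1 n) (hl : l ∈ Set.Icc 1 k) :
    TermInF (S j l) G :=
  (he.immSub_arg hj hl).trans_subExpr (he.ts_occurs j hj.1 hj.2)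

theorem lt_of_termInT_arg {j l m : ℕ} (hj : j ∈ Set.Icc 1 n) (hl : l ∈ Set.Icc 1 k)
    (hm : m ∈ Set.Icc 1 n) (h : TermInT (Ts m) (S j l)) : m < j := by
  have harg := he.immSub_arg hj hl
  refine he.ts_order m j hm.1 hm.2 hj.1 hj.2 (Relation.ReflTransGen.tail h harg) ?_
  rintro rfl
  exact absurd h.sizeOf_le harg.sizeOf_lt.not_ge

theorem fordT_arg_lt {j l : ℕ} (hj : j ∈ Set.Icc 1 n) (hl : l ∈ Set.Icc 1 k) :
    fordT n Ts (S j l) < j :=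
  Nat.lt_of_le_pred hj.1 <| csSup_le' fun _ hm =>
    Nat.le_pred_of_lt (he.lt_of_termInT_arg hj hl ⟨hm.1, hm.2.1⟩ hm.2.2)

end ElimHyps

/-- The effect of the first `i` elimination steps on the terms of `G`: they replace exactly the
applications `Ts 1, …, Ts i` of `f`, by `f`-free nested ITEs. -/
structure EliminatedUpTo (G : EufFormula Fn Pr) (f : Fn) (Ts : ℕ → EufTerm Fn Pr) (vf : ℕ → Fn)
    (hatS : ℕ → ℕ → EufTerm Fn Pr) (k i : ℕ) : Prop where
  exists_eq_of_mem_replaced : ∀ T ∈ replaced Ts vf hatS k i, TermInF T G →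
    ∃ j ∈ Set.Icc 1 i, T = Ts j
  stepT_ts : ∀ j ∈ Set.Icc 1 i, stepT Ts vf hatS k i (Ts j) = Uterm vf hatS k j
  not_termInT_Uterm : ∀ j ∈ Set.Icc 1 i, ∀ args, ¬ TermInT (.app f args) (Uterm vf hatS k j)

namespace EliminatedUpTo

variable (he : ElimHyps G f k n Ts S vf hatS)
include he

theorem not_termInT_stepT {i : ℕ} (hE : EliminatedUpTo G f Ts vf hatS k i) {T : EufTerm Fn Pr}
    (hT : TermInF T G) (hi : ∀ m ∈ Set.Icc 1 n, TermInT (Ts m) T → m ≤ i)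
    (args : List (EufTerm Fn Pr)) : ¬ TermInT (.app f args) (stepT Ts vf hatS k i T) := by
  refine ((commutesOutside_stepT Ts vf hatS k i).app_origin (e₀ := .t T) ?_ ?_).1 T .refl
  · intro X hX hXT hocc
    obtain ⟨j, hj, rfl⟩ := hE.exists_eq_of_mem_replaced X hX (Relation.ReflTransGen.trans hXT hT)
    rw [hE.stepT_ts j hj] at hocc
    exact hE.not_termInT_Uterm j hj _ hocc
  · intro as has hnot _
    obtain ⟨m, hm₁, hmn, hm⟩ := he.ts_complete as (Relation.ReflTransGen.trans has hT)
    rw [hm] at has hnot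
    exact hnot (mem_replaced ⟨hm₁, hi m ⟨hm₁, hmn⟩ has⟩)

theorem eq_ts_of_stepT_eq_Vterm {i : ℕ} (hE : EliminatedUpTo G f Ts vf hatS k i) (hin : i ≤ n)
    {m j : ℕ} (hj : 1 ≤ j) (hjm : j ≤ m) (hm : m ≤ n) {T : EufTerm Fn Pr} (hT : TermInF T G)
    (h : stepT Ts vf hatS k i T = Vterm vf hatS k m j) : T = Ts m ∧ j = 1 := by
  have hcomm := commutesOutside_stepT Ts vf hatS k i
  have of_replaced {T j} (hj : 1 ≤ j) (hjm : j ≤ m) (hT : TermInF T G)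
      (hTR : T ∈ replaced Ts vf hatS k i)
      (h : stepT Ts vf hatS k i T = Vterm vf hatS k m j) : T = Ts m ∧ j = 1 := by
    obtain ⟨m', hm', rfl⟩ := hE.exists_eq_of_mem_replaced T hTR hT
    rw [hE.stepT_ts m' hm', Uterm] at h
    obtain ⟨rfl, rfl⟩ :=
      Vterm_injective he.injOn_vf le_rfl hm'.1 (hm'.2.trans hin) hj hjm hm h
    exact ⟨rfl, rfl⟩
  induction hjm using Nat.decreasingInduction generalizing T with
  | self =>
    by_cases hTR : T ∈ replaced Ts vf hatS k i
    · exact of_replaced hj le_rfl hT hTR h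
    rw [Vterm_self] at h
    match T with
    | .app g args =>
      rw [hcomm.app _ _ hTR, EufTerm.app.injEq] at h
      exact absurd ⟨args, h.1 ▸ hT⟩ (he.vf_fresh m hj hm)
    | .ite C a b => simp [hcomm.ite _ _ _ hTR] at h
  | of_succ j hlt ih =>
    by_cases hTR : T ∈ replaced Ts vf hatS k i
    · exact of_replaced hj hlt.le hT hTR h
    rw [Vterm_of_lt hlt] at h
    match T with
    | .app g args => simp [hcomm.app _ _ hTR] at h
    | .ite C a b =>
      rw [hcomm.ite _ _ _ hTR, EufTerm.ite.injEq] at h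
      have := (ih (by omega) (ImmSub.ite2.trans_subExpr hT) h.2.2).2
      omega

theorem injOn_stepT {i : ℕ} (hE : EliminatedUpTo G f Ts vf hatS k i) (hin : i ≤ n) :
    Set.InjOn (stepT Ts vf hatS k i) {T | TermInF T G} := by
  refine (commutesOutside_stepT Ts vf hatS k i).injOn fun X hX hXG T hT h => ?_
  obtain ⟨j, hj, rfl⟩ := hE.exists_eq_of_mem_replaced X hX hXG
  rw [hE.stepT_ts j hj] at h
  exact (hE.eq_ts_of_stepT_eq_Vterm he hin le_rfl hj.1 (hj.2.trans hin) hT h).1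

theorem exists_stepT_ts_succ {i : ℕ} (hE : EliminatedUpTo G f Ts vf hatS k i) (hin : i < n) :
    ∃ args, stepT Ts vf hatS k i (Ts (i + 1)) = .app f args := by
  have not_replaced : Ts (i + 1) ∉ replaced Ts vf hatS k i := by
    intro hR
    obtain ⟨j, hj, heq⟩ := hE.exists_eq_of_mem_replaced _ hR (he.ts_occurs _ (by omega) hin)
    have := he.ts_distinct _ j (by omega) hin hj.1 (hj.2.trans hin.le) heq
    grind
  rw [he.ts_app _ (by omega) hin] at not_replaced ⊢
  exact ⟨_, (commutesOutside_stepT Ts vf hatS k i).app _ _ not_replaced⟩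

theorem succ {i : ℕ} (hE : EliminatedUpTo G f Ts vf hatS k i) (hin : i < n)
    (hU : ∀ args, ¬ TermInT (.app f args) (Uterm vf hatS k (i + 1))) :
    EliminatedUpTo G f Ts vf hatS k (i + 1) := by
  have hin' : i + 1 ∈ Set.Icc 1 n := ⟨by omega, hin⟩
  obtain ⟨args, target_eq⟩ := hE.exists_stepT_ts_succ he hin
  refine ⟨fun T hT hTG => ?_, fun j hj => ?_, fun j hj => ?_⟩
  · rw [replaced_succ] at hT
    rcases hT with hT | hT
    · obtain ⟨j, hj, rfl⟩ := hE.exists_eq_of_mem_replaced T hT hTG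
      exact ⟨j, by grind, rfl⟩
    · exact ⟨i + 1, by simp, hE.injOn_stepT he hin.le hTG (he.ts_occurs _ hin'.1 hin'.2) hT⟩
  · rcases hj.2.eq_or_lt with rfl | hlt
    · rw [stepT, substT_self]
    · rw [stepT, hE.stepT_ts j (by grind), target_eq]
      refine (CommutesOutside.subst _ _).eq_self ?_
      rintro _ rfl
      exact hE.not_termInT_Uterm j (by grind) _
  · rcases hj.2.eq_or_lt with rfl | hlt
    exacts [hU, hE.not_termInT_Uterm j (by grind)]

end EliminatedUpTo

namespace ElimHyps

variable (he : ElimHyps G f k n Ts S vf hatS)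
include he

theorem not_termInT_hatS {j l : ℕ} (hj : j ∈ Set.Icc 1 n) (hl : l ∈ Set.Icc 1 k)
    (hE : ∀ i < j, EliminatedUpTo G f Ts vf hatS k i) (args : List (EufTerm Fn Pr)) :
    ¬ TermInT (.app f args) (hatS j l) := by
  rw [he.hatS_spec j l hj.1 hj.2 hl.1 hl.2]
  exact (hE _ (he.fordT_arg_lt hj hl)).not_termInT_stepT he (he.termInF_arg hj hl)
    (fun m hm => le_fordT hm) args

theorem eliminatedUpTo {i : ℕ} (hi : i ≤ n) : EliminatedUpTo G f Ts vf hatS k i := by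
  induction i using Nat.strong_induction_on with
  | _ i ih =>
  match i with
  | 0 => exact ⟨by simp [replaced], by simp, by simp⟩
  | i + 1 =>
    refine (ih i (by omega) (by omega)).succ he hi fun args hocc => ?_
    rcases var_or_termInT_of_termInT_Vterm le_rfl (by omega) hocc with
      ⟨m, hm, hfm, _⟩ | ⟨m, hm, l, hl, hocc⟩
    · exact he.vf_ne_f m hm.1 (hm.2.trans hi) hfm.symm
    · have hmn : m ∈ Set.Icc 1 n := ⟨hm.1, hm.2.trans hi⟩
      exact he.not_termInT_hatS hmn hl (fun i' hi' => ih i' (by grind) (by grind)) args hocc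

theorem hatS_eq {j l : ℕ} (hj : j ∈ Set.Icc 1 n) (hl : l ∈ Set.Icc 1 k) :
    hatS j l = stepT Ts vf hatS k n (S j l) := by
  have hord : fordT n Ts (S j l) ≤ n := (he.fordT_arg_lt hj hl).le.trans hj.2
  suffices h : ∀ i ≥ fordT n Ts (S j l), i ≤ n → stepT Ts vf hatS k i (S j l) = hatS j l from
    (h n hord le_rfl).symm
  intro i hi
  induction i, hi using Nat.le_induction with
  | base => exact fun _ => (he.hatS_spec j l hj.1 hj.2 hl.1 hl.2).symm
  | succ i _ ih =>
    intro hin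
    obtain ⟨args, htarget⟩ := (he.eliminatedUpTo (by omega)).exists_stepT_ts_succ he hin
    rw [stepT, ih (by omega), htarget]
    refine (CommutesOutside.subst _ _).eq_self ?_
    rintro _ rfl
    exact he.not_termInT_hatS hj hl (fun i hi => he.eliminatedUpTo (by grind)) args

end ElimHyps

/-- `ResidualApp … g args` says that `g` applied to `args` is one of the function application
terms which can occur in `Ĝ`: a new variable, or the image of an application in `G` of a symbol
other than `f`. -/
inductive ResidualApp (G : EufFormula Fn Pr) (f : Fn) (n : ℕ) (Ts : ℕ → EufTerm Fn Pr)
    (vf : ℕ → Fn) (hatS : ℕ → ℕ → EufTerm Fn Pr) (k : ℕ) : Fn → List (EufTerm Fn Pr) → Prop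
  | var (m : ℕ) : m ∈ Set.Icc 1 n → ResidualApp G f n Ts vf hatS k (vf m) []
  | mapped (g : Fn) (as : List (EufTerm Fn Pr)) : g ≠ f → TermInF (.app g as) G →
      ResidualApp G f n Ts vf hatS k g (as.map (stepT Ts vf hatS k n))

namespace ElimHyps

variable (he : ElimHyps G f k n Ts S vf hatS) {g : Fn} {args : List (EufTerm Fn Pr)}
include he

theorem residualApp_of_forall_Uterm {e₀ : EufExpr Fn Pr} (he₀ : SubExpr e₀ (.f G))
    (hU : ∀ m ∈ Set.Icc 1 n, SubExpr (.t (Ts m)) e₀ →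
      TermInT (.app g args) (Uterm vf hatS k m) → ResidualApp G f n Ts vf hatS k g args) :
    (∀ T, SubExpr (.t T) e₀ → TermInT (.app g args) (stepT Ts vf hatS k n T) →
      ResidualApp G f n Ts vf hatS k g args) ∧
    ∀ F, SubExpr (.f F) e₀ → TermInF (.app g args) (stepF Ts vf hatS k n F) →
      ResidualApp G f n Ts vf hatS k g args := by
  have hE := he.eliminatedUpTo le_rfl
  refine (commutesOutside_stepT Ts vf hatS k n).app_origin ?_ ?_
  · intro X hX hXe hocc
    obtain ⟨m, hm, rfl⟩ := hE.exists_eq_of_mem_replaced X hX (Relation.ReflTransGen.trans hXe he₀)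
    exact hU m hm hXe (hE.stepT_ts m hm ▸ hocc)
  · rintro as has hnot rfl
    have hasG : TermInF (.app g as) G := Relation.ReflTransGen.trans has he₀
    refine .mapped g as ?_ hasG
    rintro rfl
    obtain ⟨m, hm₁, hmn, hm⟩ := he.ts_complete as hasG
    exact hnot (hm ▸ mem_replaced ⟨hm₁, hmn⟩)

theorem residualApp_of_termInT_Uterm {j : ℕ} (hj : j ∈ Set.Icc 1 n)
    (h : TermInT (.app g args) (Uterm vf hatS k j)) : ResidualApp G f n Ts vf hatS k g args := by
  induction j using Nat.strong_induction_on with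
  | _ j ih =>
  rcases var_or_termInT_of_termInT_Vterm le_rfl hj.1 h with ⟨m, hm, rfl, rfl⟩ | ⟨m, hm, l, hl, hocc⟩
  · exact .var m ⟨hm.1, hm.2.trans hj.2⟩
  · have hmn : m ∈ Set.Icc 1 n := ⟨hm.1, hm.2.trans hj.2⟩
    rw [he.hatS_eq hmn hl] at hocc
    refine (he.residualApp_of_forall_Uterm (he.termInF_arg hmn hl)
      fun m' hm' hsub => ?_).1 _ .refl hocc
    exact ih m' ((he.lt_of_termInT_arg hmn hl hm' hsub).trans_le hm.2) hm'

theorem residualApp_of_termInF_elimResult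
    (h : TermInF (.app g args) (elimResult G n Ts vf hatS k)) :
    ResidualApp G f n Ts vf hatS k g args :=
  (he.residualApp_of_forall_Uterm .refl
    fun _ hm _ => he.residualApp_of_termInT_Uterm hm).2 G .refl h

end ElimHyps

end Elimination

section Semantics

variable {Fn Pr D : Type} {G : EufFormula Fn Pr} {f : Fn} {k n : ℕ} {Ts : ℕ → EufTerm Fn Pr}
  {S : ℕ → ℕ → EufTerm Fn Pr} {vf : ℕ → Fn} {hatS : ℕ → ℕ → EufTerm Fn Pr}

/-- The values of the arguments `S i 1, …, S i k` of the `i`-th application. -/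
noncomputable def argVals (I : Interp Fn Pr D) (S : ℕ → ℕ → EufTerm Fn Pr) (k i : ℕ) : List D :=
  ((List.range' 1 k).map (S i)).map (evalT I)

theorem evalF_Cform (I : Interp Fn Pr D) (i j : ℕ) :
    evalF I (Cform hatS k i j) = true ↔ argVals I hatS k i = argVals I hatS k j := by
  simp only [Cform, argVals, evalF_foldr_and, List.forall_mem_map, evalF, decide_eq_true_eq,
    List.map_map, List.map_inj_left, Function.comp_apply]

theorem exists_evalT_Vterm_eq (I : Interp Fn Pr D) {i j : ℕ} (hji : j ≤ i) :
    ∃ m ∈ Set.Icc j i, argVals I hatS k m = argVals I hatS k i ∧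
      (∀ m' ∈ Set.Ico j m, argVals I hatS k m' ≠ argVals I hatS k i) ∧
      evalT I (Vterm vf hatS k i j) = I.fn (vf m) [] := by
  induction hji using Nat.decreasingInduction with
  | self =>
    exact ⟨i, by simp, rfl, by simp, by rw [Vterm_self, evalT_app, List.map_nil]⟩
  | of_succ j hlt ih =>
    rw [Vterm_of_lt hlt, evalT]
    by_cases heq : argVals I hatS k i = argVals I hatS k j
    · refine ⟨j, ⟨le_rfl, hlt.le⟩, heq.symm, by simp, ?_⟩
      rw [if_pos ((evalF_Cform I i j).2 heq), evalT_app, List.map_nil]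
    · obtain ⟨m, hm, hargs, hfirst, hval⟩ := ih
      refine ⟨m, by grind, hargs, fun m' hm' => ?_, ?_⟩
      · rcases hm'.1.eq_or_lt with rfl | hlt'
        exacts [Ne.symm heq, hfirst m' ⟨hlt', hm'.2⟩]
      · rwa [if_neg fun hC => heq ((evalF_Cform I i j).1 hC)]

open Classical in
/-- The value of the new variable `vf i` in the extension of `J`: that of the `i`-th application of
`f`, if it is the first one with its argument values, and a fresh value otherwise. -/
noncomputable def varValue (J : Interp Fn Pr D) (f : Fn) (S : ℕ → ℕ → EufTerm Fn Pr) (k i : ℕ) :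
    D ⊕ ℕ :=
  if ∃ j ∈ Set.Ico 1 i, argVals J S k j = argVals J S k i then .inr i
  else .inl (J.fn f (argVals J S k i))

theorem eq_of_varValue_eq_inl {J : Interp Fn Pr D} {i : ℕ} {d : D}
    (h : varValue J f S k i = .inl d) : J.fn f (argVals J S k i) = d := by
  rw [varValue] at h
  split_ifs at h
  exact Sum.inl.inj h

open Classical in
/-- The interpretation `Ĵ` on `D ⊕ ℕ`, the domain of `J` extended by fresh values. Only the values
at arguments from `D` and those of the new variables matter; to be total, the other symbols read
fresh values as an arbitrary element of `D`. -/
noncomputable def elimInterp [Nonempty D] (J : Interp Fn Pr D) (f : Fn)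
    (S : ℕ → ℕ → EufTerm Fn Pr) (k : ℕ) (vf : ℕ → Fn) (n : ℕ) : Interp Fn Pr (D ⊕ ℕ) where
  fn g vs :=
    if g ∈ vf '' Set.Icc 1 n then varValue J f S k (Function.invFunOn vf (Set.Icc 1 n) g)
    else .inl (J.fn g (vs.map (Sum.elim id fun _ => Classical.arbitrary D)))
  pr p vs := J.pr p (vs.map (Sum.elim id fun _ => Classical.arbitrary D))

section

variable [Nonempty D] (J : Interp Fn Pr D)

theorem elimInterp_fn_var (hvf : (Set.Icc 1 n).InjOn vf) {m : ℕ} (hm : m ∈ Set.Icc 1 n)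
    (vs : List (D ⊕ ℕ)) : (elimInterp J f S k vf n).fn (vf m) vs = varValue J f S k m := by
  simp only [elimInterp]
  rw [if_pos (Set.mem_image_of_mem vf hm), hvf.leftInvOn_invFunOn hm]

theorem elimInterp_fn_map_inl {g : Fn} (hg : g ∉ vf '' Set.Icc 1 n) (vs : List D) :
    (elimInterp J f S k vf n).fn g (vs.map .inl) = .inl (J.fn g vs) := by
  simp [elimInterp, hg, Function.comp_def]

theorem elimInterp_pr_map_inl (p : Pr) (vs : List D) :
    (elimInterp J f S k vf n).pr p (vs.map .inl) = J.pr p vs := by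
  simp [elimInterp, Function.comp_def]

end

namespace ElimHyps

variable (he : ElimHyps G f k n Ts S vf hatS)
include he

theorem not_mem_image_vf {g : Fn} {as : List (EufTerm Fn Pr)} (h : TermInF (.app g as) G) :
    g ∉ vf '' Set.Icc 1 n := by
  rintro ⟨i, hi, rfl⟩
  exact he.vf_fresh i hi.1 hi.2 ⟨as, h⟩

theorem evalT_ts (J : Interp Fn Pr D) {j : ℕ} (hj : j ∈ Set.Icc 1 n) :
    evalT J (Ts j) = J.fn f (argVals J S k j) := by
  rw [he.ts_app j hj.1 hj.2, evalT_app, argVals]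

theorem varValue_injOn {J : Interp Fn Pr D} {Sg : Set Fn} (hf : f ∈ Sg)
    (hdiv : DiverseFor J G Sg) : (Set.Icc 1 n).InjOn (varValue J f S k) := by
  have occurs {i} (hi : i ∈ Set.Icc 1 n) :
      TermInF (.app f ((List.range' 1 k).map (S i))) G :=
    he.ts_app i hi.1 hi.2 ▸ he.ts_occurs i hi.1 hi.2
  intro i hi j hj h
  wlog hij : i < j generalizing i j
  · rcases (not_lt.1 hij).eq_or_lt with rfl | hji
    exacts [rfl, (this hj hi h.symm hji).symm]
  rw [varValue, varValue] at h
  split_ifs at h with hi' hj' hj'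
  · exact Sum.inr.inj h
  · have := (diverseFor_iff.1 hdiv f _ hf (occurs hi) f _ (occurs hj) (Sum.inl.inj h)).2
    exact absurd ⟨i, ⟨hi.1, hij⟩, this⟩ hj'

theorem varValue_ne_inl {J : Interp Fn Pr D} {Sg : Set Fn} (hf : f ∈ Sg)
    (hdiv : DiverseFor J G Sg) {i : ℕ} (hi : i ∈ Set.Icc 1 n) {g : Fn}
    {as : List (EufTerm Fn Pr)} (hg : g ≠ f) (hG : TermInF (.app g as) G) :
    varValue J f S k i ≠ .inl (J.fn g (as.map (evalT J))) := fun h =>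
  hg (diverseFor_iff.1 hdiv f _ hf (he.ts_app i hi.1 hi.2 ▸ he.ts_occurs i hi.1 hi.2) g as hG
    (eq_of_varValue_eq_inl h)).1

variable [Nonempty D] (J : Interp Fn Pr D)

theorem eval_of_forall_Uterm {e₀ : EufExpr Fn Pr} (he₀ : SubExpr e₀ (.f G))
    (hU : ∀ m ∈ Set.Icc 1 n, SubExpr (.t (Ts m)) e₀ →
      evalT (elimInterp J f S k vf n) (Uterm vf hatS k m) = .inl (evalT J (Ts m))) :
    (∀ T, SubExpr (.t T) e₀ →
      evalT (elimInterp J f S k vf n) (stepT Ts vf hatS k n T) = .inl (evalT J T)) ∧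
    ∀ F, SubExpr (.f F) e₀ →
      evalF (elimInterp J f S k vf n) (stepF Ts vf hatS k n F) = evalF J F := by
  have hE := he.eliminatedUpTo le_rfl
  refine (commutesOutside_stepT Ts vf hatS k n).eval Sum.inl_injective ?_
    (elimInterp_pr_map_inl J) ?_
  · exact fun g as has _ =>
      elimInterp_fn_map_inl J (he.not_mem_image_vf (Relation.ReflTransGen.trans has he₀))
  · intro X hX hXe
    obtain ⟨m, hm, rfl⟩ := hE.exists_eq_of_mem_replaced X hX (Relation.ReflTransGen.trans hXe he₀)
    rw [hE.stepT_ts m hm, hU m hm hXe]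

theorem evalT_Uterm {j : ℕ} (hj : j ∈ Set.Icc 1 n) :
    evalT (elimInterp J f S k vf n) (Uterm vf hatS k j) = .inl (evalT J (Ts j)) := by
  induction j using Nat.strong_induction_on with
  | _ j ih =>
  have argVals_hatS {m} (hm : m ∈ Set.Icc 1 j) :
      argVals (elimInterp J f S k vf n) hatS k m = (argVals J S k m).map .inl := by
    have hmn : m ∈ Set.Icc 1 n := ⟨hm.1, hm.2.trans hj.2⟩
    simp only [argVals, List.map_map, List.map_inj_left, Function.comp_apply, List.mem_range'_1]
    intro l hl
    have hl : l ∈ Set.Icc 1 k := ⟨hl.1, by omega⟩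
    rw [he.hatS_eq hmn hl]
    exact (he.eval_of_forall_Uterm J (he.termInF_arg hmn hl) fun m' hm' hsub =>
      ih m' ((he.lt_of_termInT_arg hmn hl hm' hsub).trans_le hm.2) hm').1 _ .refl
  have argVals_eq_iff {m} (hm : m ∈ Set.Icc 1 j) :
      argVals (elimInterp J f S k vf n) hatS k m = argVals (elimInterp J f S k vf n) hatS k j ↔
        argVals J S k m = argVals J S k j := by
    rw [argVals_hatS hm, argVals_hatS ⟨hj.1, le_rfl⟩,
      (List.map_injective_iff.2 Sum.inl_injective).eq_iff]
  obtain ⟨m, hm, hargs, hfirst, hval⟩ :=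
    exists_evalT_Vterm_eq (vf := vf) (hatS := hatS) (k := k) (elimInterp J f S k vf n) hj.1
  rw [argVals_eq_iff hm] at hargs
  have first : ¬ ∃ m' ∈ Set.Ico 1 m, argVals J S k m' = argVals J S k m := by
    rintro ⟨m', hm', heq⟩
    exact hfirst m' hm' ((argVals_eq_iff (by grind)).2 (heq.trans hargs))
  rw [Uterm, hval, elimInterp_fn_var J he.injOn_vf (by grind), varValue, if_neg first, hargs,
    he.evalT_ts J hj]

theorem evalT_stepT {T : EufTerm Fn Pr} (hT : TermInF T G) :
    evalT (elimInterp J f S k vf n) (stepT Ts vf hatS k n T) = .inl (evalT J T) :=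
  (he.eval_of_forall_Uterm J .refl fun _ hm _ => he.evalT_Uterm J hm).1 T hT

theorem evalF_elimResult :
    evalF (elimInterp J f S k vf n) (elimResult G n Ts vf hatS k) = evalF J G :=
  (he.eval_of_forall_Uterm J .refl fun _ hm _ => he.evalT_Uterm J hm).2 G .refl

theorem map_evalT_stepT {g : Fn} {as : List (EufTerm Fn Pr)} (hG : TermInF (.app g as) G) :
    (as.map (stepT Ts vf hatS k n)).map (evalT (elimInterp J f S k vf n)) =
      (as.map (evalT J)).map .inl := by
  simp only [List.map_map, List.map_inj_left, Function.comp_apply]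
  exact fun a ha => he.evalT_stepT J ((ImmSub.appArg ha).trans_subExpr hG)

variable {J}

theorem diverseFor_elimResult {Sg : Set Fn} (hf : f ∈ Sg) (hdiv : DiverseFor J G Sg) :
    DiverseFor (elimInterp J f S k vf n) (elimResult G n Ts vf hatS k)
      ((Sg \ {f}) ∪ {g | ∃ i, 1 ≤ i ∧ i ≤ n ∧ g = vf i}) := by
  rw [diverseFor_iff]
  intro g args hg hocc g' args' hocc' heq
  cases he.residualApp_of_termInF_elimResult hocc with
  | var i hi =>
    rw [List.map_nil, elimInterp_fn_var J he.injOn_vf hi] at heq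
    cases he.residualApp_of_termInF_elimResult hocc' with
    | var j hj =>
      rw [List.map_nil, elimInterp_fn_var J he.injOn_vf hj] at heq
      rw [he.varValue_injOn hf hdiv hi hj heq]
      exact ⟨rfl, rfl⟩
    | mapped _ as' hgf' hG' =>
      rw [he.map_evalT_stepT J hG', elimInterp_fn_map_inl J (he.not_mem_image_vf hG')] at heq
      exact absurd heq (he.varValue_ne_inl hf hdiv hi hgf' hG')
  | mapped _ as hgf hG =>
    rw [he.map_evalT_stepT J hG] at heq ⊢
    rw [elimInterp_fn_map_inl J (he.not_mem_image_vf hG)] at heq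
    cases he.residualApp_of_termInF_elimResult hocc' with
    | var j hj =>
      rw [List.map_nil, elimInterp_fn_var J he.injOn_vf hj] at heq
      exact absurd heq.symm (he.varValue_ne_inl hf hdiv hj hgf hG)
    | mapped _ as' _ hG' =>
      rw [he.map_evalT_stepT J hG'] at heq ⊢
      rw [elimInterp_fn_map_inl J (he.not_mem_image_vf hG')] at heq
      have hgSg : g ∈ Sg := by
        rcases hg with hg | ⟨i, hi, hin, rfl⟩
        exacts [hg.1, (he.vf_fresh i hi hin ⟨as, hG⟩).elim]
      obtain ⟨rfl, hargs⟩ := diverseFor_iff.1 hdiv g as hgSg hG g' as' hG' (Sum.inl.inj heq)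
      exact ⟨rfl, congrArg _ hargs⟩

end ElimHyps

end Semantics

/-- If `f ∈ Σ` and `J` is diverse for `G` w.r.t. `Σ`, then there is an
interpretation `Ĵ` diverse for `Ĝ` w.r.t. `(Σ \ {f}) ∪ {vf_1, …, vf_n}` with
`Ĵ[Ĝ] = J[G]`. -/
theorem preserve_diverse_lemma {Fn Pr D : Type} [Nonempty D] (G : EufFormula Fn Pr)
    (f : Fn) (k n : ℕ) (Ts : ℕ → EufTerm Fn Pr) (S : ℕ → ℕ → EufTerm Fn Pr)
    (vf : ℕ → Fn) (hatS : ℕ → ℕ → EufTerm Fn Pr)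
    (he : ElimHyps G f k n Ts S vf hatS) (Sg : Set Fn) (hf : f ∈ Sg)
    (J : Interp Fn Pr D) (hdiv : DiverseFor J G Sg) :
    ∃ (D' : Type) (_ : Nonempty D') (Jh : Interp Fn Pr D'),
      DiverseFor Jh (elimResult G n Ts vf hatS k)
        ((Sg \ {f}) ∪ {g | ∃ i, 1 ≤ i ∧ i ≤ n ∧ g = vf i}) ∧
      evalF Jh (elimResult G n Ts vf hatS k) = evalF J G := by
  exact ⟨D ⊕ ℕ, inferInstance, elimInterp J f S k vf n, he.diverseFor_elimResult hf hdiv,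
    he.evalF_elimResult J⟩
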